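/- Two CAT(0) spaces glued along isometric closed convex subsets (in particular, two flat Euclidean sectors glued along a common boundary ray) form a CAT(0) space; consequently, in the glued space the CN inequality d(x, m)² ≤ (1/2)d(x,y)² + (1/2)d(x,z)² − (1/4)d(y,z)² holds for midpoints m of y, z. -/

import Mathlib

open Set Metric Filter

variable {M : Type*}

def IsGeodesic [MetricSpace M] (γ : ℝ → M) : Prop :=
  ∀ s ∈ Set.Icc (0:ℝ) 1, ∀ t ∈ Set.Icc (0:ℝ) 1,
    dist (γ s) (γ t) = |s - t| * dist (γ 0) (γ 1)

def GeodesicSpace (M : Type*) [MetricSpace M] : Prop :=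
  ∀ x y : M, ∃ γ : ℝ → M, IsGeodesic γ ∧ γ 0 = x ∧ γ 1 = y

def Perp [MetricSpace M] (γ η : ℝ → M) : Prop :=
  ∀ t ∈ Set.Icc (0:ℝ) 1, ∀ s ∈ Set.Icc (0:ℝ) 1,
    dist (γ 0) (γ t) ≤ dist (η s) (γ t)

def SO (M : Type*) [MetricSpace M] : Prop :=
  ∀ γ η : ℝ → M, IsGeodesic γ → IsGeodesic η → γ 0 = η 0 → Perp γ η → Perp η γ

def WeaklyConvex [MetricSpace M] (C : Set M) : Prop :=
  ∀ x ∈ C, ∀ y ∈ C, ∃ γ : ℝ → M, IsGeodesic γ ∧ γ 0 = x ∧ γ 1 = y ∧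
    ∀ t ∈ Set.Icc (0:ℝ) 1, γ t ∈ C

def GeoConvex [MetricSpace M] (C : Set M) : Prop :=
  ∀ γ : ℝ → M, IsGeodesic γ → γ 0 ∈ C → γ 1 ∈ C → ∀ t ∈ Set.Icc (0:ℝ) 1, γ t ∈ C

def NearestPt [MetricSpace M] (C : Set M) (x y : M) : Prop :=
  y ∈ C ∧ dist x y = Metric.infDist x C

def NE (M : Type*) [MetricSpace M] : Prop :=
  ∀ C : Set M, IsClosed C → WeaklyConvex C → ∀ x y xC yC : M,
    NearestPt C x xC → NearestPt C y yC → dist xC yC ≤ dist x y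

def BusemannConvex (M : Type*) [MetricSpace M] : Prop :=
  ∀ γ η : ℝ → M, IsGeodesic γ → IsGeodesic η →
    ConvexOn ℝ (Set.Icc (0:ℝ) 1) (fun t => dist (γ t) (η t))
/-- CN inequality restricted to a subset. -/
def CNOn [MetricSpace M] (X : Set M) : Prop :=
  ∀ x ∈ X, ∀ y ∈ X, ∀ z ∈ X, ∀ m ∈ X,
    dist y m = dist y z / 2 → dist z m = dist y z / 2 →
    dist x m ^ 2 ≤ (1/2) * dist x y ^ 2 + (1/2) * dist x z ^ 2 - (1/4) * dist y z ^ 2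

/-- The Euclidean comparison inequality for the distance from `x` to a point `m` lying
on a geodesic from `y` to `z`. -/
def ComparisonAt [MetricSpace M] (x y z m : M) : Prop :=
  ∀ t ∈ Set.Icc (0:ℝ) 1, dist y m = t * dist y z → dist m z = (1 - t) * dist y z →
    dist x m ^ 2 ≤ (1 - t) * dist x y ^ 2 + t * dist x z ^ 2 - t * (1 - t) * dist y z ^ 2

/-- The comparison inequality for all points between `y` and `z`. -/
def Comparison [MetricSpace M] (x y z : M) : Prop :=
  ∀ m, ComparisonAt x y z m

theorem Comparison.symm [MetricSpace M] {x y z : M} (h : Comparison x y z) :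
    Comparison x z y := by
  intro m t ht h1 h2
  have := h m (1 - t) ⟨by linarith [ht.2], by linarith [ht.1]⟩
    (by rw [dist_comm y m, h2, dist_comm z y])
    (by rw [dist_comm m z, h1, dist_comm z y]; ring)
  rw [dist_comm z y]
  linarith

theorem IsGeodesic.continuousOn [MetricSpace M] {γ : ℝ → M} (hγ : IsGeodesic γ) :
    ContinuousOn γ (Set.Icc 0 1) := by
  have : LipschitzOnWith (Real.toNNReal (dist (γ 0) (γ 1))) γ (Set.Icc 0 1) := by
    refine LipschitzOnWith.of_dist_le_mul fun s hs t ht => ?_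
    rw [hγ s hs t ht, Real.coe_toNNReal _ dist_nonneg, Real.dist_eq, mul_comm]
  exact this.continuousOn

theorem IsGeodesic.dist_of_le [MetricSpace M] {γ : ℝ → M} (hγ : IsGeodesic γ) {s t : ℝ}
    (hs : 0 ≤ s) (hst : s ≤ t) (ht : t ≤ 1) :
    dist (γ s) (γ t) = (t - s) * dist (γ 0) (γ 1) := by
  rw [hγ s ⟨hs, hst.trans ht⟩ t ⟨hs.trans hst, ht⟩, abs_sub_comm, abs_of_nonneg (by linarith)]

theorem isGeodesic_of_dist_of_le [MetricSpace M] {γ : ℝ → M}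
    (h : ∀ s t, 0 ≤ s → s ≤ t → t ≤ 1 → dist (γ s) (γ t) = (t - s) * dist (γ 0) (γ 1)) :
    IsGeodesic γ := by
  intro s hs t ht
  rcases le_total s t with hst | hst
  · rw [h s t hs.1 hst ht.2, abs_sub_comm, abs_of_nonneg (by linarith)]
  · rw [dist_comm, h t s ht.1 hst hs.2, abs_of_nonneg (by linarith)]

/-- A point at the right distances from `y` and `z` lies on a geodesic from `y` to `z`. -/
theorem GeodesicSpace.exists_isGeodesic_through [MetricSpace M] (hgeo : GeodesicSpace M)
    {y z m : M} {t : ℝ} (ht : t ∈ Set.Icc (0:ℝ) 1)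
    (h1 : dist y m = t * dist y z) (h2 : dist m z = (1 - t) * dist y z) :
    ∃ γ : ℝ → M, IsGeodesic γ ∧ γ 0 = y ∧ γ 1 = z ∧ γ t = m := by
  obtain ⟨ht0, ht1⟩ := ht
  rcases ht0.eq_or_lt with rfl | ht0
  · obtain ⟨γ, hγ, h0, h1'⟩ := hgeo y z
    exact ⟨γ, hγ, h0, h1', h0.trans (dist_eq_zero.1 (by simpa using h1))⟩
  rcases ht1.eq_or_lt with rfl | ht1
  · obtain ⟨γ, hγ, h0, h1'⟩ := hgeo y z
    exact ⟨γ, hγ, h0, h1', h1'.trans (dist_eq_zero.1 (by simpa using h2)).symm⟩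
  obtain ⟨α, hα, hα0, hα1⟩ := hgeo y m
  obtain ⟨β, hβ, hβ0, hβ1⟩ := hgeo m z
  have ht1' : 0 < 1 - t := by linarith
  set γ : ℝ → M := fun s => if s ≤ t then α (s / t) else β ((s - t) / (1 - t)) with hγdef
  have e0 : γ 0 = y := by simp [hγdef, ht0.le, hα0]
  have e1 : γ 1 = z := by simp [hγdef, not_le.2 ht1, div_self ht1'.ne', hβ1]
  have et : γ t = m := by simp [hγdef, div_self ht0.ne', hα1]
  have hleft : ∀ s r, 0 ≤ s → s ≤ r → r ≤ t → dist (γ s) (γ r) = (r - s) * dist y z := by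
    intro s r hs hsr hr
    simp only [hγdef, hr, hsr.trans hr, if_true]
    rw [hα.dist_of_le (by positivity) (by gcongr) ((div_le_one ht0).2 hr), hα0, hα1, h1]
    field_simp
  have hright : ∀ s r, t ≤ s → s ≤ r → r ≤ 1 → dist (γ s) (γ r) = (r - s) * dist y z := by
    have key : ∀ s, t ≤ s → γ s = β ((s - t) / (1 - t)) := by
      intro s hs
      rcases hs.eq_or_lt with rfl | hs
      · simp [et, hβ0]
      · simp [hγdef, not_le.2 hs]
    intro s r hs hsr hr
    rw [key s hs, key r (hs.trans hsr), hβ.dist_of_le (div_nonneg (by linarith) ht1'.le)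
      (by gcongr) ((div_le_one ht1').2 (by linarith)), hβ0, hβ1, h2]
    field_simp
    ring
  refine ⟨γ, isGeodesic_of_dist_of_le ?_, e0, e1, et⟩
  intro s r hs hsr hr
  rw [e0, e1]
  rcases le_total r t with hrt | hrt
  · exact hleft s r hs hsr hrt
  rcases le_total t s with hst | hst
  · exact hright s r hst hsr hr
  have a1 := hleft s t hs hst le_rfl
  have a2 := hright t r le_rfl hrt hr
  have a3 := hleft 0 s le_rfl hs hst
  have a4 := hright r 1 hrt hr le_rfl
  rw [e0] at a3
  rw [e1] at a4
  have b1 := dist_triangle (γ s) (γ t) (γ r)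
  have b2 := dist_triangle4 y (γ s) (γ r) z
  linarith

theorem GeoConvex.mem_of_dist [MetricSpace M] (hgeo : GeodesicSpace M) {C : Set M}
    (hC : GeoConvex C) {y z m : M} {t : ℝ} (ht : t ∈ Set.Icc (0:ℝ) 1)
    (h1 : dist y m = t * dist y z) (h2 : dist m z = (1 - t) * dist y z)
    (hy : y ∈ C) (hz : z ∈ C) : m ∈ C := by
  obtain ⟨γ, hγ, rfl, rfl, rfl⟩ := hgeo.exists_isGeodesic_through ht h1 h2
  exact hC γ hγ hy hz t ht

theorem GeoConvex.mem_subsegment [MetricSpace M] (hgeo : GeodesicSpace M) {C : Set M}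
    (hC : GeoConvex C) {γ : ℝ → M} (hγ : IsGeodesic γ) {r s q : ℝ}
    (hr : 0 ≤ r) (hrs : r ≤ s) (hsq : s ≤ q) (hq : q ≤ 1) (h1 : γ r ∈ C) (h2 : γ q ∈ C) :
    γ s ∈ C := by
  rcases (hrs.trans hsq).eq_or_lt with h | h
  · obtain rfl : r = s := le_antisymm hrs (h ▸ hsq)
    exact h1
  have hpos : 0 < q - r := by linarith
  refine hC.mem_of_dist hgeo (t := (s - r) / (q - r))
    ⟨div_nonneg (by linarith) hpos.le, (div_le_one hpos).2 (by linarith)⟩ ?_ ?_ h1 h2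
  · rw [hγ.dist_of_le hr hrs (hsq.trans hq), hγ.dist_of_le hr h.le hq]
    field_simp
  · rw [hγ.dist_of_le (hr.trans hrs) hsq hq, hγ.dist_of_le hr h.le hq]
    field_simp
    ring

/-- The comparison inequality, parametrized along a geodesic. -/
theorem ComparisonAt.along [MetricSpace M] {γ : ℝ → M} (hγ : IsGeodesic γ) {x : M} {r s q : ℝ}
    (hr : 0 ≤ r) (hrs : r ≤ s) (hsq : s ≤ q) (hq : q ≤ 1)
    (h : ComparisonAt x (γ r) (γ q) (γ s)) :
    (q - r) * dist x (γ s) ^ 2 ≤ (q - s) * dist x (γ r) ^ 2 + (s - r) * dist x (γ q) ^ 2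
      - (s - r) * (q - s) * (q - r) * dist (γ 0) (γ 1) ^ 2 := by
  rcases (hrs.trans hsq).eq_or_lt with hrq | hrq
  · obtain rfl : r = s := le_antisymm hrs (hrq ▸ hsq)
    subst hrq
    simp
  have hpos : 0 < q - r := by linarith
  have := h ((s - r) / (q - r))
    ⟨div_nonneg (by linarith) hpos.le, (div_le_one hpos).2 (by linarith)⟩
    (by
      rw [hγ.dist_of_le hr hrs (hsq.trans hq), hγ.dist_of_le hr hrq.le hq]
      field_simp)
    (by
      rw [hγ.dist_of_le (hr.trans hrs) hsq hq, hγ.dist_of_le hr hrq.le hq]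
      field_simp
      ring)
  rw [hγ.dist_of_le hr hrq.le hq] at this
  calc _ ≤ (q - r) * _ := mul_le_mul_of_nonneg_left this hpos.le
    _ = _ := by
      field_simp
      ring

/-- The CN inequality at midpoints implies the comparison inequality at all points. -/
theorem CNOn.comparison [MetricSpace M] (hgeo : GeodesicSpace M) {C : Set M}
    (hC : GeoConvex C) (hCN : CNOn C) {x y z : M} (hx : x ∈ C) (hy : y ∈ C) (hz : z ∈ C) :
    Comparison x y z := by
  intro m t ht h1 h2
  obtain ⟨γ, hγ, rfl, rfl, rfl⟩ := hgeo.exists_isGeodesic_through ht h1 h2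
  set D := dist (γ 0) (γ 1) with hD
  set g : ℝ → ℝ := fun s => dist x (γ s) ^ 2 - (1 - s) * dist x (γ 0) ^ 2
    - s * dist x (γ 1) ^ 2 + s * (1 - s) * D ^ 2 with hg
  have hcont : ContinuousOn g (Set.Icc 0 1) := by
    have := hγ.continuousOn
    fun_prop
  obtain ⟨τ, hτ, hmax⟩ := isCompact_Icc.exists_isMaxOn ⟨t, ht⟩ hcont
  have hmid : ∀ a b, 0 ≤ a → a ≤ b → b ≤ 1 → g ((a + b) / 2) ≤ (g a + g b) / 2 := by
    intro a b ha hab hb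
    have hmem : ∀ s ∈ Set.Icc (0:ℝ) 1, γ s ∈ C := hC γ hγ hy hz
    have := hCN x hx (γ a) (hmem a ⟨ha, hab.trans hb⟩) (γ b) (hmem b ⟨ha.trans hab, hb⟩)
      (γ ((a + b) / 2)) (hmem _ ⟨by linarith, by linarith⟩)
      (by rw [hγ.dist_of_le ha (by linarith) (by linarith), hγ.dist_of_le ha hab hb]; ring)
      (by
        rw [dist_comm, hγ.dist_of_le (by linarith) (by linarith) hb, hγ.dist_of_le ha hab hb]
        ring)
    rw [hγ.dist_of_le ha hab hb] at this
    simp only [hg]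
    nlinarith [this]
  have g0 : g 0 = 0 := by simp [hg]
  have g1 : g 1 = 0 := by simp [hg]
  have hle : g τ ≤ 0 := by
    rcases le_total τ (1 / 2) with h | h
    · have h3 := hmid 0 (2 * τ) le_rfl (by linarith [hτ.1]) (by linarith)
      have h4 : g (2 * τ) ≤ g τ := hmax ⟨by linarith [hτ.1], by linarith⟩
      rw [show (0 + 2 * τ) / 2 = τ by ring] at h3
      linarith
    · have h3 := hmid (2 * τ - 1) 1 (by linarith) (by linarith [hτ.2]) le_rfl
      have h4 : g (2 * τ - 1) ≤ g τ := hmax ⟨by linarith, by linarith [hτ.2]⟩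
      rw [show (2 * τ - 1 + 1) / 2 = τ by ring] at h3
      linarith
  have : g t ≤ g τ := hmax ht
  simp only [hg] at this hle
  linarith

/-- If `a` lies between `y` and `z` and the triangles `y, a, x` and `z, a, x` satisfy the
comparison inequality towards their common side, then the triangle `x, y, z` satisfies
the comparison inequality at `a`. -/
theorem comparisonAt_of_comparison [MetricSpace M] (hgeo : GeodesicSpace M) {x y z a : M}
    (hy : Comparison y a x) (hz : Comparison z a x) : ComparisonAt x y z a := by
  intro t ht h1 h2
  rcases (mul_nonneg ht.1 dist_nonneg : 0 ≤ t * dist y z).eq_or_lt with hp0 | hp0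
  · obtain rfl : y = a := dist_eq_zero.1 (h1.trans hp0.symm)
    rcases mul_eq_zero.1 hp0.symm with rfl | h0
    · simp
    · obtain rfl := dist_eq_zero.1 h0
      simp; linarith
  rcases (mul_nonneg (by linarith [ht.2]) dist_nonneg : 0 ≤ (1 - t) * dist y z).eq_or_lt
    with hq0 | hq0
  · obtain rfl : a = z := dist_eq_zero.1 (h2.trans hq0.symm)
    rcases mul_eq_zero.1 hq0.symm with h0 | h0
    · obtain rfl : t = 1 := by linarith
      simp
    · obtain rfl := dist_eq_zero.1 h0
      simp; linarith
  obtain ⟨σ, hσ, rfl, rfl⟩ := hgeo a x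
  set p := t * dist y z with hp
  set q := (1 - t) * dist y z with hq
  have hsum : p + q = dist y z := by rw [hp, hq]; ring
  set X := dist (σ 0) (σ 1) with hX
  set Y := dist y (σ 1) with hY
  set Z := dist z (σ 1) with hZ
  have key : ∀ s ∈ Set.Ioc (0:ℝ) 1, p * q * (p + q) + (p + q) * ((1 - s) * X ^ 2) ≤
      q * Y ^ 2 + p * Z ^ 2 := by
    intro s hs
    have hs' : s ∈ Set.Icc (0:ℝ) 1 := ⟨hs.1.le, hs.2⟩
    have d1 : dist (σ 0) (σ s) = s * X := by
      rw [hσ.dist_of_le le_rfl hs'.1 hs'.2]; ring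
    have d2 : dist (σ s) (σ 1) = (1 - s) * X := hσ.dist_of_le hs'.1 hs'.2 le_rfl
    have a1 := hy (σ s) s hs' d1 d2
    have a2 := hz (σ s) s hs' d1 d2
    rw [h1] at a1
    rw [dist_comm z (σ 0), h2] at a2
    have a3 := dist_triangle y (σ s) z
    rw [dist_comm (σ s) z, ← hsum] at a3
    set u := dist y (σ s)
    set v := dist z (σ s)
    have b1 : 2 * p * u ≤ u ^ 2 + p ^ 2 := by nlinarith [sq_nonneg (u - p)]
    have b2 : 2 * q * v ≤ v ^ 2 + q ^ 2 := by nlinarith [sq_nonneg (v - q)]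
    have c1 : q * (2 * p * u) ≤
        q * ((1 - s) * p ^ 2 + s * Y ^ 2 - s * (1 - s) * X ^ 2 + p ^ 2) :=
      mul_le_mul_of_nonneg_left (by linarith) hq0.le
    have c2 : p * (2 * q * v) ≤
        p * ((1 - s) * q ^ 2 + s * Z ^ 2 - s * (1 - s) * X ^ 2 + q ^ 2) :=
      mul_le_mul_of_nonneg_left (by linarith) hp0.le
    have c3 : 2 * (p * q) * (p + q) ≤ 2 * (p * q) * (u + v) :=
      mul_le_mul_of_nonneg_left a3 (by positivity)
    refine le_of_mul_le_mul_left ?_ hs.1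
    linarith
  have lim : p * q * (p + q) + (p + q) * X ^ 2 ≤ q * Y ^ 2 + p * Z ^ 2 := by
    have ht : Tendsto (fun s : ℝ => p * q * (p + q) + (p + q) * ((1 - s) * X ^ 2))
        (nhdsWithin 0 (Set.Ioi 0)) (nhds (p * q * (p + q) + (p + q) * ((1 - 0) * X ^ 2))) :=
      (Continuous.tendsto (by fun_prop) 0).mono_left nhdsWithin_le_nhds
    rw [sub_zero, one_mul] at ht
    exact le_of_tendsto ht
      (eventually_of_mem (Ioc_mem_nhdsGT one_pos) key)
  rw [dist_comm (σ 1) (σ 0), dist_comm (σ 1) y, dist_comm (σ 1) z]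
  have hDpos : 0 < dist y z := by linarith
  refine le_of_mul_le_mul_left ?_ hDpos
  rw [hsum, hp, hq] at lim
  linarith

/-- If `a` lies between `x` and `m`, the triangles `x, b, a` and `a, b, m` glued along the
side from `b` to `a` give the comparison inequality from `x` to the side from `b` to `m`. -/
theorem comparison_of_glue [MetricSpace M] (hgeo : GeodesicSpace M) {x a m b : M}
    (ha : dist x a + dist a m = dist x m) (hx : Comparison x b a) (hm : Comparison a b m)
    (hc : ∀ s ∈ Set.Icc (0:ℝ) 1, ∀ c, dist b c = s * dist b m → dist c m = (1 - s) * dist b m →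
      Comparison c b a) :
    Comparison x b m := by
  rcases (dist_nonneg : 0 ≤ dist x a).eq_or_lt with hα | hα
  · obtain rfl := dist_eq_zero.1 hα.symm
    exact hm
  rcases (dist_nonneg : 0 ≤ dist a m).eq_or_lt with hβ | hβ
  · obtain rfl := dist_eq_zero.1 hβ.symm
    exact hx
  intro c s hs h1 h2
  rcases hs.1.eq_or_lt with rfl | hs0
  · obtain rfl : b = c := dist_eq_zero.1 (by simpa using h1)
    simp
  have hac := hm c s hs h1 h2
  have hce := hc s hs c h1 h2
  rw [← ha]
  set α := dist x a with hαd
  set β := dist a m with hβd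
  have hw : 0 < α + s * β := by positivity
  obtain ⟨u, hu⟩ : ∃ u, u = s * (α + β) / (α + s * β) := ⟨_, rfl⟩
  have hu1 : 1 - u = α * (1 - s) / (α + s * β) := by
    rw [hu]; field_simp; ring
  have hum : u ∈ Set.Icc (0:ℝ) 1 := by
    constructor
    · rw [hu]; positivity
    · have : 0 ≤ 1 - u := by
        rw [hu1]
        exact div_nonneg (mul_nonneg hα.le (by linarith [hs.2])) hw.le
      linarith
  obtain ⟨σ, hσ, hσ0, hσ1⟩ := hgeo b a
  have d1 : dist b (σ u) = u * dist b a := by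
    have := hσ.dist_of_le le_rfl hum.1 hum.2
    rwa [hσ0, hσ1, sub_zero] at this
  have d2 : dist (σ u) a = (1 - u) * dist b a := by
    have := hσ.dist_of_le hum.1 hum.2 le_rfl
    rwa [hσ0, hσ1] at this
  have F := hx (σ u) u hum d1 d2
  have G := hce (σ u) u hum d1 d2
  have tri := dist_triangle x (σ u) c
  rw [dist_comm (σ u) c] at tri
  rw [dist_comm c b, dist_comm c a, h1] at G
  rw [dist_comm a b] at hac
  set L := dist b a
  set B := dist b m
  set f := dist x (σ u)
  set g := dist c (σ u)
  have G' : g ^ 2 ≤ (1 - u) * (s * B) ^ 2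
      + u * ((1 - s) * L ^ 2 + s * β ^ 2 - s * (1 - s) * B ^ 2) - u * (1 - u) * L ^ 2 := by
    have := mul_le_mul_of_nonneg_left hac hum.1
    linarith
  have hxc : dist x c ^ 2 ≤ (f + g) ^ 2 := by gcongr
  have hfg : (f + g) ^ 2 ≤ (α + s * β) / α * f ^ 2 + (α + s * β) / (s * β) * g ^ 2 := by
    have : (α + s * β) / α * f ^ 2 + (α + s * β) / (s * β) * g ^ 2 - (f + g) ^ 2
        = (s * β * f - α * g) ^ 2 / (α * (s * β)) := by
      field_simp
      ring
    have h0 : 0 ≤ (s * β * f - α * g) ^ 2 / (α * (s * β)) := by positivity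
    linarith
  have F' := mul_le_mul_of_nonneg_left F (show 0 ≤ (α + s * β) / α by positivity)
  have G'' := mul_le_mul_of_nonneg_left G' (show 0 ≤ (α + s * β) / (s * β) by positivity)
  refine hxc.trans (hfg.trans ((add_le_add F' G'').trans_eq ?_))
  rw [hu1, hu]
  field_simp
  ring

/-- A geodesic joining two closed sets that cover the space meets their intersection. -/
theorem IsGeodesic.exists_mem_inter [MetricSpace M] {X₁ X₂ : Set M}
    (hcover : X₁ ∪ X₂ = Set.univ) (hc₁ : IsClosed X₁) (hc₂ : IsClosed X₂)
    {γ : ℝ → M} (hγ : IsGeodesic γ) (h0 : γ 0 ∈ X₁) (h1 : γ 1 ∈ X₂) :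
    ∃ τ ∈ Set.Icc (0:ℝ) 1, γ τ ∈ X₁ ∩ X₂ := by
  have hpre : IsPreconnected (γ '' Set.Icc 0 1) :=
    isPreconnected_Icc.image γ hγ.continuousOn
  obtain ⟨_, ⟨τ, hτ, rfl⟩, h⟩ := isPreconnected_closed_iff.1 hpre X₁ X₂ hc₁ hc₂
    (by rw [hcover]; exact Set.subset_univ _)
    ⟨γ 0, ⟨0, by simp, rfl⟩, h0⟩ ⟨γ 1, ⟨1, by simp, rfl⟩, h1⟩
  exact ⟨τ, hτ, h⟩

theorem comparison_of_mem_inter [MetricSpace M] (hgeo : GeodesicSpace M) {X₁ X₂ : Set M}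
    (hcover : X₁ ∪ X₂ = Set.univ) (hc₁ : IsClosed X₁) (hc₂ : IsClosed X₂)
    (hv₁ : GeoConvex X₁) (hv₂ : GeoConvex X₂) (hCN₁ : CNOn X₁) (hCN₂ : CNOn X₂)
    {x b m : M} (hx : x ∈ X₂) (hb : b ∈ X₁ ∩ X₂) (hm : m ∈ X₁) : Comparison x b m := by
  obtain ⟨γ, hγ, rfl, rfl⟩ := hgeo m x
  obtain ⟨τ, hτ, ha⟩ := hγ.exists_mem_inter hcover hc₁ hc₂ hm hx
  refine comparison_of_glue hgeo (a := γ τ) ?_ (hCN₂.comparison hgeo hv₂ hx hb.2 ha.2)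
    (hCN₁.comparison hgeo hv₁ ha.1 hb.1 hm) fun s hs c h1 h2 =>
    hCN₁.comparison hgeo hv₁ (hv₁.mem_of_dist hgeo hs h1 h2 hb.1 hm) hb.1 ha.1
  rw [dist_comm (γ 1), dist_comm _ (γ 0), dist_comm (γ 1), hγ.dist_of_le hτ.1 hτ.2 le_rfl,
    hγ.dist_of_le le_rfl hτ.1 hτ.2]
  ring

theorem comparison_of_mem_of_mem_of_mem [MetricSpace M] (hgeo : GeodesicSpace M)
    {X₁ X₂ : Set M} (hcover : X₁ ∪ X₂ = Set.univ) (hc₁ : IsClosed X₁) (hc₂ : IsClosed X₂)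
    (hv₁ : GeoConvex X₁) (hv₂ : GeoConvex X₂) (hCN₁ : CNOn X₁) (hCN₂ : CNOn X₂)
    {x y z : M} (hx : x ∈ X₁) (hy : y ∈ X₁) (hz : z ∈ X₂) : Comparison x y z := by
  intro m t ht h1 h2
  obtain ⟨γ, hγ, rfl, rfl, rfl⟩ := hgeo.exists_isGeodesic_through ht h1 h2
  obtain ⟨τ, hτ, ha⟩ := hγ.exists_mem_inter hcover hc₁ hc₂ hy hz
  have glue : ∀ w ∈ X₂, Comparison w (γ τ) x := fun w hw =>
    comparison_of_mem_inter hgeo hcover hc₁ hc₂ hv₁ hv₂ hCN₁ hCN₂ hw ha hx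
  have cross : ∀ r q, 0 ≤ r → r ≤ τ → τ ≤ q → q ≤ 1 →
      (q - r) * dist x (γ τ) ^ 2 ≤ (q - τ) * dist x (γ r) ^ 2 + (τ - r) * dist x (γ q) ^ 2
        - (τ - r) * (q - τ) * (q - r) * dist (γ 0) (γ 1) ^ 2 := by
    intro r q hr hrτ hτq hq
    refine ComparisonAt.along hγ hr hrτ hτq hq (comparisonAt_of_comparison hgeo ?_ ?_)
    · exact hCN₁.comparison hgeo hv₁
        (hv₁.mem_subsegment hgeo hγ le_rfl hr hrτ hτ.2 hy ha.1) ha.1 hx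
    · exact glue _ (hv₂.mem_subsegment hgeo hγ hτ.1 hτq hq le_rfl ha.2 hz)
  rcases lt_trichotomy t τ with h | rfl | h
  · have k1 := ComparisonAt.along hγ le_rfl ht.1 h.le hτ.2
      (hCN₁.comparison hgeo hv₁ hx hy ha.1 (γ t))
    have k2 := cross t 1 ht.1 h.le hτ.2 le_rfl
    have k1' := mul_le_mul_of_nonneg_left k1 (show 0 ≤ 1 - t by linarith [ht.2])
    have k2' := mul_le_mul_of_nonneg_left k2 ht.1
    refine le_of_mul_le_mul_left ?_ (show 0 < τ - t by linarith)
    linarith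
  · have := cross 0 1 le_rfl hτ.1 hτ.2 le_rfl
    linarith
  · have k1 := ComparisonAt.along hγ hτ.1 h.le ht.2 le_rfl
      ((comparison_of_mem_inter hgeo (by rwa [Set.union_comm]) hc₂ hc₁ hv₂ hv₁ hCN₂ hCN₁
        hx ha.symm hz) (γ t))
    have k2 := cross 0 t le_rfl hτ.1 h.le ht.2
    have k1' := mul_le_mul_of_nonneg_left k1 ht.1
    have k2' := mul_le_mul_of_nonneg_left k2 (show 0 ≤ 1 - t by linarith [ht.2])
    refine le_of_mul_le_mul_left ?_ (show 0 < t - τ by linarith)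
    linarith

theorem comparison_of_mem_left [MetricSpace M] (hgeo : GeodesicSpace M)
    {X₁ X₂ : Set M} (hcover : X₁ ∪ X₂ = Set.univ) (hc₁ : IsClosed X₁) (hc₂ : IsClosed X₂)
    (hv₁ : GeoConvex X₁) (hv₂ : GeoConvex X₂) (hCN₁ : CNOn X₁) (hCN₂ : CNOn X₂)
    {x y z : M} (hy : y ∈ X₁) (hz : z ∈ X₁) : Comparison x y z := by
  have hx : x ∈ X₁ ∪ X₂ := hcover ▸ Set.mem_univ x
  rcases hx with hx | hx
  · exact hCN₁.comparison hgeo hv₁ hx hy hz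
  · intro m t ht h1 h2
    have hm : m ∈ X₁ := hv₁.mem_of_dist hgeo ht h1 h2 hy hz
    have key : ∀ w ∈ X₁, Comparison w m x := fun w hw =>
      comparison_of_mem_of_mem_of_mem hgeo hcover hc₁ hc₂ hv₁ hv₂ hCN₁ hCN₂ hw hm hx
    exact comparisonAt_of_comparison hgeo (key y hy) (key z hz) t ht h1 h2

theorem comparison_of_mem_left_of_mem_right [MetricSpace M] (hgeo : GeodesicSpace M)
    {X₁ X₂ : Set M} (hcover : X₁ ∪ X₂ = Set.univ) (hc₁ : IsClosed X₁) (hc₂ : IsClosed X₂)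
    (hv₁ : GeoConvex X₁) (hv₂ : GeoConvex X₂) (hCN₁ : CNOn X₁) (hCN₂ : CNOn X₂)
    {x y z : M} (hy : y ∈ X₁) (hz : z ∈ X₂) : Comparison x y z := by
  have hx : x ∈ X₁ ∪ X₂ := hcover ▸ Set.mem_univ x
  rcases hx with hx | hx
  · exact comparison_of_mem_of_mem_of_mem hgeo hcover hc₁ hc₂ hv₁ hv₂ hCN₁ hCN₂ hx hy hz
  · exact (comparison_of_mem_of_mem_of_mem hgeo (by rwa [Set.union_comm]) hc₂ hc₁ hv₂ hv₁
      hCN₂ hCN₁ hx hz hy).symm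

/-- Reshetnyak gluing: a geodesic space covered by two closed convex CAT(0)
pieces glued along their (nonempty, closed, convex) intersection, with the
glued distance realized through the intersection, satisfies the CN inequality
globally; in particular it is CAT(0). -/
theorem stmt13 {Z : Type*} [MetricSpace Z] (hgeo : GeodesicSpace Z)
    (X₁ X₂ : Set Z) (hcover : X₁ ∪ X₂ = Set.univ)
    (hc₁ : IsClosed X₁) (hc₂ : IsClosed X₂)
    (hv₁ : GeoConvex X₁) (hv₂ : GeoConvex X₂)
    (hA : (X₁ ∩ X₂).Nonempty) (hAc : IsClosed (X₁ ∩ X₂)) (hAv : GeoConvex (X₁ ∩ X₂))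
    (hCN₁ : CNOn X₁) (hCN₂ : CNOn X₂)
    (hglue : ∀ x ∈ X₁, ∀ y ∈ X₂,
      dist x y = sInf ((fun a => dist x a + dist a y) '' (X₁ ∩ X₂))) :
    ∀ x y z m : Z, dist y m = dist y z / 2 → dist z m = dist y z / 2 →
      dist x m ^ 2 ≤ (1/2) * dist x y ^ 2 + (1/2) * dist x z ^ 2
        - (1/4) * dist y z ^ 2 := by
  have hcover' : X₂ ∪ X₁ = Set.univ := by rwa [Set.union_comm]
  have hcmp : ∀ x y z : Z, Comparison x y z := by
    intro x y z
    have hy : y ∈ X₁ ∪ X₂ := hcover ▸ Set.mem_univ y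
    have hz : z ∈ X₁ ∪ X₂ := hcover ▸ Set.mem_univ z
    rcases hy with hy | hy <;> rcases hz with hz | hz
    · exact comparison_of_mem_left hgeo hcover hc₁ hc₂ hv₁ hv₂ hCN₁ hCN₂ hy hz
    · exact comparison_of_mem_left_of_mem_right hgeo hcover hc₁ hc₂ hv₁ hv₂ hCN₁ hCN₂ hy hz
    · exact comparison_of_mem_left_of_mem_right hgeo hcover' hc₂ hc₁ hv₂ hv₁ hCN₂ hCN₁ hy hz
    · exact comparison_of_mem_left hgeo hcover' hc₂ hc₁ hv₂ hv₁ hCN₂ hCN₁ hy hz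
  intro x y z m h1 h2
  have := hcmp x y z m (1 / 2) (by norm_num) (by rw [h1]; ring)
    (by rw [dist_comm m z, h2]; ring)
  linarith
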